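/- There exists a family of bubble parameters compatible with t, i.e. a function c : I → X → kˣ such that c i (λ + α j) = (t i j) * (c i λ) for all i, j ∈ I and λ ∈ X. -/

import Mathlib

/-- There exists a family of bubble parameters compatible with the choice of
scalars `t`: a function `c : I → X → kˣ` with `c i (λ + α j) = t i j * c i λ`
for all `i, j ∈ I` and `λ ∈ X`.  Here `X` is a free `ℤ`-module and the simple
roots `α` are `ℤ`-linearly independent. -/
theorem exists_bubbleParams
    {k : Type*} [CommRing k] {X : Type*} [AddCommGroup X] [Module.Free ℤ X]
    {I : Type*} (α : I → X) (hα : LinearIndependent ℤ α)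
    (t : I → I → kˣ) :
    ∃ c : I → X → kˣ, ∀ (i j : I) (lam : X), c i (lam + α j) = t i j * c i lam := by
  classical
  let S := Submodule.span ℤ (Set.range α)
  let b : Module.Basis I ℤ S := Module.Basis.span hα
  let f : I → S →ₗ[ℤ] Additive kˣ := fun i => b.constr ℤ (fun j => Additive.ofMul (t i j))
  have hb : ∀ j, ((b j : S) : X) = α j := fun j => congrArg Subtype.val (Module.Basis.span_apply hα j)
  have hf : ∀ i j, f i (b j) = Additive.ofMul (t i j) := fun i j => b.constr_basis ℤ _ j
  let r : X → X := fun x => Quotient.out (S.mkQ x : X ⧸ S)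
  have hr : ∀ x, x - r x ∈ S := by
    intro x
    rw [← Submodule.Quotient.eq]
    exact (Quotient.out_eq (S.mkQ x : X ⧸ S)).symm
  have hr' : ∀ x j, r (x + α j) = r x := by
    intro x j
    have h : S.mkQ (x + α j) = S.mkQ x := by
      have h0 : S.mkQ (α j) = 0 := by
        rw [← hb j]; simp
      rw [map_add, h0, add_zero]
    change Quotient.out (S.mkQ (x + α j)) = Quotient.out (S.mkQ x)
    rw [h]
  refine ⟨fun i x => (f i ⟨x - r x, hr x⟩).toMul, fun i j x => ?_⟩
  have h : (⟨x + α j - r (x + α j), hr (x + α j)⟩ : S) = b j + ⟨x - r x, hr x⟩ := by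
    apply Subtype.ext
    rw [Submodule.coe_add, hb]
    simp only [hr']
    abel
  change (f i _).toMul = _
  rw [h, map_add, hf]
  rfl
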